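/- Let W and V be n×n complex matrices. For every θ₀ ∈ ℝ, the derivative at θ₀ of the map θ ↦ exp(W + θ·V) equals exp(H) · ∫₀¹ exp(−s·H) · V · exp(s·H) ds, where H = W + θ₀·V. -/

import Mathlib

open scoped Matrix.Norms.L2Operator

theorem duhamel_aux {A : Type*} [NormedRing A] [NormedAlgebra ℝ A] [CompleteSpace A]
    (W V : A) (θ₀ : ℝ) :
    HasDerivAt (fun θ : ℝ => NormedSpace.exp (W + θ • V))
      (NormedSpace.exp (W + θ₀ • V) *
        ∫ s in (0:ℝ)..1,
          NormedSpace.exp ((-s) • (W + θ₀ • V)) * V * NormedSpace.exp (s • (W + θ₀ • V)))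
      θ₀ := by
  let _ : NormedAlgebra ℚ A := NormedAlgebra.restrictScalars ℚ ℝ A
  have hc : Continuous (NormedSpace.exp : A → A) := NormedSpace.exp_continuous
  set H := W + θ₀ • V with hH
  set G : ℝ → A := fun θ => ∫ s in (0:ℝ)..1,
    NormedSpace.exp ((-s) • H) * V * NormedSpace.exp (s • (W + θ • V)) with hG
  have hGc : Continuous G := by
    apply intervalIntegral.continuous_parametric_intervalIntegral_of_continuous'
    simp only [Function.uncurry_def]
    fun_prop
  have hinv : NormedSpace.exp H * NormedSpace.exp (-H) = 1 := by
    rw [← NormedSpace.exp_add_of_commute (Commute.neg_right (Commute.refl H))]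
    simp
  have key : ∀ θ : ℝ, NormedSpace.exp (W + θ • V) - NormedSpace.exp H
      = (θ - θ₀) • (NormedSpace.exp H * G θ) := by
    intro θ
    have hd : ∀ s : ℝ, HasDerivAt
        (fun s : ℝ => NormedSpace.exp ((-s) • H) * NormedSpace.exp (s • (W + θ • V)))
        ((θ - θ₀) • (NormedSpace.exp ((-s) • H) * V * NormedSpace.exp (s • (W + θ • V)))) s := by
      intro s
      have h1 : HasDerivAt (fun s : ℝ => NormedSpace.exp ((-s) • H))
          (NormedSpace.exp ((-s) • H) * (-H)) s := by
        have := hasDerivAt_exp_smul_const (𝕂 := ℝ) (-H) s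
        simpa only [smul_neg, neg_smul] using this
      have h2 := hasDerivAt_exp_smul_const' (𝕂 := ℝ) (W + θ • V) s
      refine (h1.mul h2).congr_deriv ?_
      symm
      have : (θ - θ₀) • V = (W + θ • V) - H := by rw [hH, sub_smul]; abel
      rw [← smul_mul_assoc, ← mul_smul_comm, this]
      generalize W + θ • V = K
      noncomm_ring
    have hi := intervalIntegral.integral_eq_sub_of_hasDerivAt (a := 0) (b := 1)
      (fun s _ => hd s) (Continuous.intervalIntegrable (by fun_prop) _ _)
    rw [intervalIntegral.integral_smul] at hi
    rw [← mul_smul_comm]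
    simp only [hG]
    rw [hi]
    simp only [neg_smul, one_smul, zero_smul, neg_zero, NormedSpace.exp_zero, mul_one]
    rw [mul_sub, ← mul_assoc, hinv, one_mul, mul_one]
  rw [hasDerivAt_iff_tendsto_slope]
  have ht : Filter.Tendsto (fun θ => NormedSpace.exp H * G θ) (nhdsWithin θ₀ {θ₀}ᶜ)
      (nhds (NormedSpace.exp H * G θ₀)) :=
    ((continuous_const.mul hGc).tendsto θ₀).mono_left nhdsWithin_le_nhds
  refine ht.congr' ?_
  filter_upwards [self_mem_nhdsWithin] with θ hθ
  have : θ - θ₀ ≠ 0 := sub_ne_zero.mpr hθ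
  rw [slope_def_module, ← hH, key, smul_smul, inv_mul_cancel₀ this, one_smul]




/-- For `n × n` complex matrices `W` and `V`, the derivative at `θ₀` of
`θ ↦ exp (W + θ • V)` equals `exp H * ∫₀¹ exp (−s • H) * V * exp (s • H) ds`,
where `H = W + θ₀ • V`. -/
theorem duhamel_formula' {n : ℕ} (W V : Matrix (Fin n) (Fin n) ℂ) (θ₀ : ℝ) :
    HasDerivAt (fun θ : ℝ => NormedSpace.exp (W + θ • V))
      (NormedSpace.exp (W + θ₀ • V) *
        ∫ s in (0:ℝ)..1,
          NormedSpace.exp ((-s) • (W + θ₀ • V)) * V * NormedSpace.exp (s • (W + θ₀ • V)))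
      θ₀ := by
  exact duhamel_aux W V θ₀
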